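/- On the 2-sphere with metric dθ² + sin²θ dφ², with G = a₁ sin φ sin θ + a₂ cos φ sin θ (i.e., a₃ = 0) and potential V = F((a₁ cos φ − a₂ sin φ) tan θ)/cos²θ for any differentiable F, the compatibility equation g^{ij} ∂_i V ∂_j G = 2 V G holds (the case mc = 1, L₀ = 0). -/

import Mathlib

/-- Partial derivative with respect to the first coordinate. -/
noncomputable def pd1 (f : ℝ × ℝ → ℝ) : ℝ × ℝ → ℝ :=
  fun p => deriv (fun s => f (s, p.2)) p.1

/-- Partial derivative with respect to the second coordinate. -/
noncomputable def pd2 (f : ℝ × ℝ → ℝ) : ℝ × ℝ → ℝ :=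
  fun p => deriv (fun s => f (p.1, s)) p.2

/-- On the 2-sphere with metric `dθ² + sin²θ dφ²`, with
`G = (a₁ sin φ + a₂ cos φ) sin θ` and
`V = F((a₁ cos φ - a₂ sin φ) tan θ) / cos²θ`, the compatibility equation
`∂_θ V ∂_θ G + (1/sin²θ) ∂_φ V ∂_φ G = 2 V G` holds (case `mc = 1`, `L₀ = 0`). -/
theorem sphere_potential_compatibility (a₁ a₂ : ℝ)
    (F : ℝ → ℝ) (hF : Differentiable ℝ F)
    (G V : ℝ × ℝ → ℝ)
    (hG : ∀ p : ℝ × ℝ, G p = (a₁ * Real.sin p.2 + a₂ * Real.cos p.2) * Real.sin p.1)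
    (hV : ∀ p : ℝ × ℝ, V p =
      F ((a₁ * Real.cos p.2 - a₂ * Real.sin p.2) * Real.tan p.1) / (Real.cos p.1) ^ 2) :
    ∀ p : ℝ × ℝ, Real.cos p.1 ≠ 0 → Real.sin p.1 ≠ 0 →
      pd1 V p * pd1 G p + (1 / (Real.sin p.1) ^ 2) * pd2 V p * pd2 G p
        = 2 * V p * G p := by
  rintro ⟨θ, φ⟩ hc hs
  dsimp only at hc hs
  obtain rfl : G = _ := funext hG
  obtain rfl : V = _ := funext hV
  have hFd := fun x => (hF x).hasDerivAt
  have hGθ := (Real.hasDerivAt_sin θ).const_mul (a₁ * Real.sin φ + a₂ * Real.cos φ)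
  have hGφ := (((Real.hasDerivAt_sin φ).const_mul a₁).add
    ((Real.hasDerivAt_cos φ).const_mul a₂)).mul_const (Real.sin θ)
  have hVθ := (HasDerivAt.comp θ (hFd _)
    ((Real.hasDerivAt_tan hc).const_mul (a₁ * Real.cos φ - a₂ * Real.sin φ))).div
    ((Real.hasDerivAt_cos θ).pow 2) (pow_ne_zero 2 hc)
  have hVφ := (HasDerivAt.comp φ (hFd _)
    ((((Real.hasDerivAt_cos φ).const_mul a₁).sub
      ((Real.hasDerivAt_sin φ).const_mul a₂)).mul_const (Real.tan θ))).div_const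
    (Real.cos θ ^ 2)
  have eGθ := hGθ.deriv
  have eGφ := hGφ.deriv
  have eVθ := hVθ.deriv
  have eVφ := hVφ.deriv
  simp only [pd1, pd2]
  erw [eGθ, eGφ, eVθ, eVφ]
  simp only [Function.comp_apply, Pi.pow_apply, Pi.sub_apply]
  generalize deriv F _ = D
  generalize F _ = f
  rw [Real.tan_eq_sin_div_cos]
  field_simp
  ring
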